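/- Let W denote the set of finite words over the alphabet {0,1}, and for an integer k ≥ 1 let A_k be the finite graph whose vertex set is {(u,v) ∈ W × W : k−1 ≤ |u|+|v| ≤ k} (|w| denoting the length of the word w), with an edge between (u,v) and (u',v') whenever either v = v' and u' is obtained from u by appending one letter, or u = u' and v' is obtained from v by appending one letter. Then there exists a universal constant c > 0 such that for every k ≥ 1 and every function f : V(A_k) → ℝ with Σ_{v ∈ V(A_k)} f(v) = 0, one has Σ_{{a,b} ∈ E(A_k)} |f(a) − f(b)| ≥ (c/(k+2)) · Σ_{v ∈ V(A_k)} |f(v)|, where the first sum is over the edges of A_k. -/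

import Mathlib

open Set

/-- The vertex set of the annulus `A_k` of radii `{k−1, k}` in the product of two rooted
infinite binary trees: pairs of binary words whose lengths sum to `k−1` or `k`. -/
def AnnV (k : ℕ) : Type :=
  {p : List Bool × List Bool // k - 1 ≤ p.1.length + p.2.length ∧ p.1.length + p.2.length ≤ k}

/-- One-step relation in the product of two rooted binary trees: append one letter to one
of the two coordinates. -/
def AnnRel (a b : List Bool × List Bool) : Prop :=
  (a.2 = b.2 ∧ ∃ x : Bool, b.1 = a.1 ++ [x]) ∨ (a.1 = b.1 ∧ ∃ x : Bool, b.2 = a.2 ++ [x])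

/-- The annulus graph `A_k`. -/
def annGraph (k : ℕ) : SimpleGraph (AnnV k) :=
  SimpleGraph.fromRel (fun a b => AnnRel a.1 b.1)

/-- The value `|f(a) − f(b)|` on the edge `{a, b}`. -/
noncomputable def edgeVal {k : ℕ} (f : AnnV k → ℝ) : Sym2 (AnnV k) → ℝ :=
  Sym2.lift ⟨fun a b => |f a - f b|, fun a b => abs_sub_comm (f a) (f b)⟩

namespace AnnProof

/-- Words of length `n`. -/
def W : ℕ → Finset (List Bool)
  | 0 => {[]}
  | n + 1 => (W n ×ˢ (Finset.univ : Finset Bool)).image (fun p => p.1 ++ [p.2])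

lemma mem_W (n : ℕ) : ∀ l : List Bool, l ∈ W n ↔ l.length = n := by
  induction n with
  | zero => intro l; simp [W]
  | succ n ih =>
    intro l
    simp only [W, Finset.mem_image, Finset.mem_product, Finset.mem_univ, and_true, Prod.exists]
    constructor
    · rintro ⟨a, b, h, rfl⟩
      simp [(ih a).1 h]
    · intro h
      rcases List.eq_nil_or_concat l with rfl | ⟨u, x, rfl⟩
      · simp at h
      · refine ⟨u, x, (ih u).2 ?_, by simp⟩
        simpa using h

lemma sum_W_succ (n : ℕ) (g : List Bool → ℝ) :
    ∑ l ∈ W (n + 1), g l = ∑ u ∈ W n, (g (u ++ [true]) + g (u ++ [false])) := by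
  rw [W, Finset.sum_image, Finset.sum_product]
  · simp
  · rintro ⟨a, b⟩ _ ⟨c, d⟩ _ h
    have := List.append_inj' h rfl
    simp at this
    simp [this]

lemma card_W (n : ℕ) : ∑ _u ∈ W n, (1 : ℝ) = 2 ^ n := by
  induction n with
  | zero => simp [W]
  | succ n ih =>
    rw [sum_W_succ, pow_succ, ← ih, Finset.sum_mul]
    norm_num

/-- Energy at a bottom vertex. -/
def en (F : List Bool → List Bool → ℝ) (u v : List Bool) : ℝ :=
  |F u v - F (u ++ [true]) v| + |F u v - F (u ++ [false]) v| +
    (|F u v - F u (v ++ [true])| + |F u v - F u (v ++ [false])|)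

/-- Energy at a level. -/
def E (F : List Bool → List Bool → ℝ) (n s : ℕ) : ℝ :=
  ∑ u ∈ W s, ∑ v ∈ W (n - s), en F u v

lemma en_nonneg (F : List Bool → List Bool → ℝ) (u v) : 0 ≤ en F u v := by
  unfold en; positivity

lemma E_nonneg (F : List Bool → List Bool → ℝ) (n s) : 0 ≤ E F n s :=
  Finset.sum_nonneg fun _ _ => Finset.sum_nonneg fun _ _ => en_nonneg _ _ _

/-- Average over the first coordinate. -/
noncomputable def M (F : List Bool → List Bool → ℝ) (s : ℕ) (v : List Bool) : ℝ :=
  (2 ^ s)⁻¹ * ∑ u ∈ W s, F u v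

lemma M_step (F : List Bool → List Bool → ℝ) (s : ℕ) (v : List Bool) (x : Bool) :
    2 ^ s * |M F s (v ++ [x]) - M F (s + 1) v| ≤ ∑ u ∈ W s, en F u v := by
  have h2 : (0 : ℝ) < 2 ^ s := by positivity
  have : 2 ^ s * |M F s (v ++ [x]) - M F (s + 1) v| =
      |∑ u ∈ W s, (F u (v ++ [x]) - (F (u ++ [true]) v + F (u ++ [false]) v) / 2)| := by
    rw [show (2 : ℝ) ^ s * |M F s (v ++ [x]) - M F (s + 1) v| =
      |2 ^ s * (M F s (v ++ [x]) - M F (s + 1) v)| by rw [abs_mul, abs_of_pos h2]]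
    congr 1
    unfold M
    rw [sum_W_succ, Finset.sum_sub_distrib, ← Finset.sum_div, pow_succ]
    field_simp
  rw [this]
  refine (Finset.abs_sum_le_sum_abs _ _).trans (Finset.sum_le_sum fun u _ => ?_)
  unfold en
  have h1 := neg_abs_le (F u v - F (u ++ [true]) v)
  have h2 := le_abs_self (F u v - F (u ++ [true]) v)
  have h3 := neg_abs_le (F u v - F (u ++ [false]) v)
  have h4 := le_abs_self (F u v - F (u ++ [false]) v)
  have h5 := neg_abs_le (F u v - F u (v ++ [true]))
  have h6 := le_abs_self (F u v - F u (v ++ [true]))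
  have h7 := neg_abs_le (F u v - F u (v ++ [false]))
  have h8 := le_abs_self (F u v - F u (v ++ [false]))
  cases x <;> rw [abs_le] <;> constructor <;> linarith

lemma D_step (F : List Bool → List Bool → ℝ) (a : ℝ) (n s : ℕ) (hs : s ≤ n) :
    2 ^ s * ∑ v ∈ W (n + 1 - s), |M F s v - a| ≤
      2 ^ (s + 1) * ∑ v ∈ W (n + 1 - (s + 1)), |M F (s + 1) v - a| + 2 * E F n s := by
  have e1 : n + 1 - s = (n - s) + 1 := by omega
  have e2 : n + 1 - (s + 1) = n - s := by omega
  rw [e1, e2, sum_W_succ, E, Finset.sum_comm, Finset.mul_sum, Finset.mul_sum, Finset.mul_sum,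
    ← Finset.sum_add_distrib]
  refine Finset.sum_le_sum fun v _ => ?_
  have h2 : (0 : ℝ) < 2 ^ s := by positivity
  have ht := M_step F s v true
  have hf := M_step F s v false
  have t1 := mul_le_mul_of_nonneg_left
    (abs_sub_le (M F s (v ++ [true])) (M F (s + 1) v) a) h2.le
  have t2 := mul_le_mul_of_nonneg_left
    (abs_sub_le (M F s (v ++ [false])) (M F (s + 1) v) a) h2.le
  rw [pow_succ]
  linarith

lemma D_bound (F : List Bool → List Bool → ℝ) (n s : ℕ) (hs : s ≤ n + 1) :
    ∑ v ∈ W (n + 1), |F [] v - M F (n + 1) []| ≤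
      2 ^ s * ∑ v ∈ W (n + 1 - s), |M F s v - M F (n + 1) []| +
        2 * ∑ i ∈ Finset.range s, E F n i := by
  induction s with
  | zero => simp [M, W]
  | succ s ih =>
    have := ih (by omega)
    have := D_step F (M F (n + 1) []) n s (by omega)
    rw [Finset.sum_range_succ]
    linarith

/-- Deviation from `a` at a top level. -/
def G (F : List Bool → List Bool → ℝ) (a : ℝ) (n s : ℕ) : ℝ :=
  ∑ u ∈ W s, ∑ v ∈ W (n + 1 - s), |F u v - a|

lemma G_eq (F : List Bool → List Bool → ℝ) (a : ℝ) (n s : ℕ) (hs : s ≤ n) :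
    G F a n s = ∑ u ∈ W s, ∑ v ∈ W (n - s), (|F u (v ++ [true]) - a| + |F u (v ++ [false]) - a|) := by
  have e1 : n + 1 - s = (n - s) + 1 := by omega
  unfold G
  rw [e1]
  simp_rw [sum_W_succ]

lemma G_step (F : List Bool → List Bool → ℝ) (a : ℝ) (n s : ℕ) (hs : s ≤ n) :
    G F a n (s + 1) ≤ G F a n s + E F n s := by
  have e2 : n + 1 - (s + 1) = n - s := by omega
  rw [G_eq F a n s hs, G, e2, sum_W_succ, E, ← Finset.sum_add_distrib]
  refine Finset.sum_le_sum fun u _ => ?_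
  rw [← Finset.sum_add_distrib, ← Finset.sum_add_distrib]
  refine Finset.sum_le_sum fun v _ => ?_
  unfold en
  have a1 := abs_sub_le (F (u ++ [true]) v) (F u v) a
  have a2 := abs_sub_le (F (u ++ [false]) v) (F u v) a
  have a3 := abs_sub_le (F u v) (F u (v ++ [true])) a
  have a4 := abs_sub_le (F u v) (F u (v ++ [false])) a
  rw [abs_sub_comm (F (u ++ [true]) v) (F u v)] at a1
  rw [abs_sub_comm (F (u ++ [false]) v) (F u v)] at a2
  linarith

lemma H_le (F : List Bool → List Bool → ℝ) (a : ℝ) (n s : ℕ) (hs : s ≤ n) :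
    ∑ u ∈ W s, ∑ v ∈ W (n - s), |F u v - a| ≤ G F a n s + E F n s := by
  rw [G_eq F a n s hs, E, ← Finset.sum_add_distrib]
  refine Finset.sum_le_sum fun u _ => ?_
  rw [← Finset.sum_add_distrib]
  refine Finset.sum_le_sum fun v _ => ?_
  unfold en
  have a3 := abs_sub_le (F u v) (F u (v ++ [true])) a
  have := abs_nonneg (F u v - F (u ++ [true]) v)
  have := abs_nonneg (F u v - F (u ++ [false]) v)
  have := abs_nonneg (F u v - F u (v ++ [false]))
  have := abs_nonneg (F u (v ++ [false]) - a)
  linarith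

lemma G_bound (F : List Bool → List Bool → ℝ) (n s : ℕ) (hs : s ≤ n + 1) :
    G F (M F (n + 1) []) n s ≤ 3 * ∑ i ∈ Finset.range (n + 1), E F n i := by
  have key : ∀ s ≤ n + 1, G F (M F (n + 1) []) n s ≤
      2 * ∑ i ∈ Finset.range (n + 1), E F n i + ∑ i ∈ Finset.range s, E F n i := by
    intro s
    induction s with
    | zero =>
      intro _
      have := D_bound F n (n + 1) le_rfl
      simpa [G, W] using this
    | succ s ih =>
      intro h
      have := ih (by omega)
      have := G_step F (M F (n + 1) []) n s (by omega)
      rw [Finset.sum_range_succ _ s]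
      linarith
  have h1 := key s hs
  have h2 : ∑ i ∈ Finset.range s, E F n i ≤ ∑ i ∈ Finset.range (n + 1), E F n i :=
    Finset.sum_le_sum_of_subset_of_nonneg (Finset.range_mono hs) fun i _ _ => E_nonneg F n i
  linarith

/-- Pairs of words of total length `m`. -/
def T (m : ℕ) : Finset (List Bool × List Bool) :=
  (Finset.range (m + 1)).biUnion fun i => W i ×ˢ W (m - i)

lemma mem_T (m : ℕ) (p : List Bool × List Bool) : p ∈ T m ↔ p.1.length + p.2.length = m := by
  simp only [T, Finset.mem_biUnion, Finset.mem_range, Finset.mem_product, mem_W]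
  constructor
  · rintro ⟨i, h, h1, h2⟩; omega
  · intro h; exact ⟨p.1.length, by omega, rfl, by omega⟩

lemma sum_T (m : ℕ) (g : List Bool × List Bool → ℝ) :
    ∑ p ∈ T m, g p = ∑ i ∈ Finset.range (m + 1), ∑ u ∈ W i, ∑ v ∈ W (m - i), g (u, v) := by
  rw [T, Finset.sum_biUnion]
  · simp_rw [Finset.sum_product]
  · intro i _ j _ hij
    rw [Function.onFun, Finset.disjoint_left]
    intro p hp hq
    simp only [Finset.mem_product, mem_W] at hp hq
    omega

lemma main_bound (F : List Bool → List Bool → ℝ) (n : ℕ) :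
    ∃ a : ℝ, ∑ p ∈ T n ∪ T (n + 1), |F p.1 p.2 - a| ≤
      6 * ((n : ℝ) + 3) * ∑ p ∈ T n, en F p.1 p.2 := by
  refine ⟨M F (n + 1) [], ?_⟩
  set a := M F (n + 1) []
  have hd : Disjoint (T n) (T (n + 1)) := by
    rw [Finset.disjoint_left]; intro p h1 h2; rw [mem_T] at h1 h2; omega
  rw [Finset.sum_union hd, sum_T, sum_T, sum_T]
  change _ + ∑ i ∈ Finset.range (n + 1 + 1), G F a n i ≤
    6 * ((n : ℝ) + 3) * ∑ i ∈ Finset.range (n + 1), E F n i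
  have b1 : ∑ i ∈ Finset.range (n + 1 + 1), G F a n i ≤
      ∑ i ∈ Finset.range (n + 1 + 1), 3 * ∑ i ∈ Finset.range (n + 1), E F n i :=
    Finset.sum_le_sum fun i hi => G_bound F n i (by simp at hi; omega)
  have b2 : ∑ i ∈ Finset.range (n + 1), ∑ u ∈ W i, ∑ v ∈ W (n - i), |F u v - a| ≤
      ∑ i ∈ Finset.range (n + 1), (3 * ∑ i ∈ Finset.range (n + 1), E F n i + E F n i) :=
    Finset.sum_le_sum fun i hi => by
      have hi' : i ≤ n := by simp at hi; omega
      have := H_le F a n i hi'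
      have := G_bound F n i (by omega)
      linarith
  rw [Finset.sum_add_distrib] at b2
  have hE : 0 ≤ ∑ i ∈ Finset.range (n + 1), E F n i := Finset.sum_nonneg fun i _ => E_nonneg F n i
  simp only [Finset.sum_const, Finset.card_range, nsmul_eq_mul] at b1 b2
  push_cast at b1 b2
  dsimp only
  nlinarith

lemma main_bound' (F : List Bool → List Bool → ℝ) (n : ℕ)
    (h0 : ∑ p ∈ T n ∪ T (n + 1), F p.1 p.2 = 0) :
    ∑ p ∈ T n ∪ T (n + 1), |F p.1 p.2| ≤
      12 * ((n : ℝ) + 3) * ∑ p ∈ T n, en F p.1 p.2 := by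
  obtain ⟨a, ha⟩ := main_bound F n
  have h1 : ∑ _p ∈ T n ∪ T (n + 1), |a| ≤ ∑ p ∈ T n ∪ T (n + 1), |F p.1 p.2 - a| := by
    refine le_trans (le_of_eq ?_) (Finset.abs_sum_le_sum_abs _ _)
    rw [Finset.sum_sub_distrib, h0]
    simp [abs_mul]
  have h2 : ∑ p ∈ T n ∪ T (n + 1), |F p.1 p.2| ≤
      ∑ p ∈ T n ∪ T (n + 1), (|F p.1 p.2 - a| + |a|) :=
    Finset.sum_le_sum fun p _ => by
      have := abs_add_le (F p.1 p.2 - a) a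
      simpa using this
  rw [Finset.sum_add_distrib] at h2
  linarith

lemma finsum_V (n : ℕ) (g : List Bool × List Bool → ℝ) :
    ∑ᶠ v : AnnV (n + 1), g v.1 = ∑ p ∈ T n ∪ T (n + 1), g p := by
  rw [← finsum_mem_coe_finset]
  have := finsum_subtype_eq_finsum_cond (f := g) (fun p : List Bool × List Bool =>
    n + 1 - 1 ≤ p.1.length + p.2.length ∧ p.1.length + p.2.length ≤ n + 1)
  refine this.trans ?_
  refine finsum_congr fun p => ?_
  refine finsum_congr_Prop ?_ fun _ => rfl
  simp only [Finset.coe_union, Set.mem_union, Finset.mem_coe, mem_T, eq_iff_iff]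
  omega

instance (n : ℕ) : Finite (AnnV (n + 1)) := by
  refine Set.Finite.to_subtype (s := {p : List Bool × List Bool |
    n + 1 - 1 ≤ p.1.length + p.2.length ∧ p.1.length + p.2.length ≤ n + 1}) ?_
  refine (Finset.finite_toSet (T n ∪ T (n + 1))).subset ?_
  intro p hp
  simp only [Set.mem_ofPred_eq] at hp
  simp only [Finset.coe_union, Set.mem_union, Finset.mem_coe, mem_T]
  omega

/-- Append a letter to one of the coordinates. -/
def app (p : List Bool × List Bool) : Bool × Bool → List Bool × List Bool
  | (true, x) => (p.1 ++ [x], p.2)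
  | (false, x) => (p.1, p.2 ++ [x])

lemma app_len (p : List Bool × List Bool) (q) :
    (app p q).1.length + (app p q).2.length = p.1.length + p.2.length + 1 := by
  rcases q with ⟨_ | _, x⟩ <;> simp [app] <;> omega

lemma app_rel (p : List Bool × List Bool) (q) : AnnRel p (app p q) := by
  rcases q with ⟨_ | _, x⟩ <;> simp [app, AnnRel]

lemma app_inj (p : List Bool × List Bool) (q q') (h : app p q = app p q') : q = q' := by
  rcases q with ⟨_ | _, x⟩ <;> rcases q' with ⟨_ | _, y⟩ <;> simp_all [app]

/-- Bottom vertex. -/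
def bot (n : ℕ) (p : {p // p ∈ T n}) : AnnV (n + 1) :=
  ⟨p.1, by have := (mem_T n p.1).1 p.2; omega⟩

/-- Top vertex. -/
def top (n : ℕ) (p : {p // p ∈ T n}) (q : Bool × Bool) : AnnV (n + 1) :=
  ⟨app p.1 q, by have := (mem_T n p.1).1 p.2; have := app_len p.1 q; omega⟩

lemma bot_ne_top (n : ℕ) (p p' q) : bot n p ≠ top n p' q := by
  intro h
  have h1 := congrArg Subtype.val h
  simp only [bot, top] at h1
  have := app_len p'.1 q
  rw [← h1, (mem_T n p.1).1 p.2, (mem_T n p'.1).1 p'.2] at this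
  omega

/-- The edges. -/
def edg (n : ℕ) (r : {p // p ∈ T n} × (Bool × Bool)) : Sym2 (AnnV (n + 1)) :=
  s(bot n r.1, top n r.1 r.2)

lemma edg_inj (n : ℕ) : Function.Injective (edg n) := by
  rintro ⟨p, q⟩ ⟨p', q'⟩ h
  simp only [edg, Sym2.eq_iff] at h
  rcases h with ⟨h1, h2⟩ | ⟨h1, h2⟩
  · have e1 : p = p' := by
      have h3 : (bot n p).1 = (bot n p').1 := by rw [h1]
      exact Subtype.ext h3
    subst e1
    have := app_inj p.1 q q' (congrArg Subtype.val h2)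
    rw [this]
  · exact absurd h1 (bot_ne_top n _ _ _)

lemma edg_mem (n : ℕ) (r) : edg n r ∈ (annGraph (n + 1)).edgeSet := by
  rw [edg, SimpleGraph.mem_edgeSet, annGraph, SimpleGraph.fromRel_adj]
  exact ⟨bot_ne_top n _ _ _, Or.inl (app_rel _ _)⟩

lemma edgeVal_nonneg {k : ℕ} (f : AnnV k → ℝ) (e) : 0 ≤ edgeVal f e := by
  induction e using Sym2.ind with
  | _ a b => exact abs_nonneg _

lemma edge_bound (n : ℕ) (f : AnnV (n + 1) → ℝ) (F : List Bool → List Bool → ℝ)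
    (hF : ∀ v : AnnV (n + 1), f v = F v.1.1 v.1.2) :
    ∑ p ∈ T n, en F p.1 p.2 ≤ ∑ᶠ e ∈ (annGraph (n + 1)).edgeSet, edgeVal f e := by
  classical
  have hfin : (annGraph (n + 1)).edgeSet.Finite := Set.toFinite _
  rw [finsum_mem_eq_finite_toFinset_sum _ hfin]
  have h1 : ∑ e ∈ Finset.univ.image (edg n), edgeVal f e ≤ ∑ e ∈ hfin.toFinset, edgeVal f e := by
    refine Finset.sum_le_sum_of_subset_of_nonneg ?_ fun e _ _ => edgeVal_nonneg f e
    intro e he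
    simp only [Finset.mem_image, Finset.mem_univ, true_and] at he
    obtain ⟨r, rfl⟩ := he
    simpa using edg_mem n r
  refine le_trans (le_of_eq ?_) h1
  rw [Finset.sum_image fun _ _ _ _ h => edg_inj n h, Fintype.sum_prod_type,
    ← Finset.sum_coe_sort]
  refine Finset.sum_congr rfl fun p _ => ?_
  rw [Fintype.sum_prod_type]
  have key : ∀ q, edgeVal f (edg n (p, q)) =
      |F p.1.1 p.1.2 - F (app p.1 q).1 (app p.1 q).2| := by
    intro q
    change |f (bot n p) - f (top n p q)| = _
    rw [hF, hF]
    rfl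
  simp [key, app, en]

end AnnProof

/-- `L¹`-Poincaré inequality for the annuli `A_k`: there is a universal `c > 0` such that
for every `k ≥ 1` and every zero-mean `f : V(A_k) → ℝ`,
`Σ_{{a,b} ∈ E(A_k)} |f(a) − f(b)| ≥ (c/(k+2))·Σ_v |f(v)|`. -/
theorem annulus_poincare_inequality :
    ∃ c > (0 : ℝ), ∀ k : ℕ, 1 ≤ k → ∀ f : AnnV k → ℝ, (∑ᶠ v : AnnV k, f v) = 0 →
      (c / ((k : ℝ) + 2)) * (∑ᶠ v : AnnV k, |f v|) ≤
        ∑ᶠ e ∈ (annGraph k).edgeSet, edgeVal f e := by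
  refine ⟨1 / 12, by norm_num, ?_⟩
  intro k hk f hf
  obtain ⟨n, rfl⟩ : ∃ n, k = n + 1 := ⟨k - 1, by omega⟩
  classical
  obtain ⟨F, hF⟩ : ∃ F : List Bool → List Bool → ℝ, ∀ v : AnnV (n + 1), f v = F v.1.1 v.1.2 := by
    refine ⟨fun u v => if h : n + 1 - 1 ≤ (u, v).1.length + (u, v).2.length ∧
      (u, v).1.length + (u, v).2.length ≤ n + 1 then f ⟨(u, v), h⟩ else 0, ?_⟩
    intro v
    obtain ⟨⟨u, w⟩, h⟩ := v
    dsimp only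
    rw [dif_pos h]
  have h0 := AnnProof.finsum_V n (fun p => F p.1 p.2)
  have h1 := AnnProof.finsum_V n (fun p => |F p.1 p.2|)
  simp only [← hF] at h0 h1
  rw [hf] at h0
  have h2 := AnnProof.main_bound' F n h0.symm
  have h3 := AnnProof.edge_bound n f F hF
  rw [h1]
  push_cast
  have h4 : (0 : ℝ) < (n : ℝ) + 1 + 2 := by positivity
  refine le_trans ?_ h3
  rw [div_mul_eq_mul_div, div_le_iff₀ h4]
  linarith
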